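/- Let k ≥ 2 be an integer and let γ, d, ε be nonnegative reals. Let 𝒢 be a graph on ℓ vertices such that d(x) + d(y) ≥ 2(1 − 1/(k−1) + γ − d − 2ε)·ℓ for all nonadjacent x, y ∈ V(𝒢), let Φ be a maximal k-clique-cover of 𝒢, and set φ_i = |Φ_i|/ℓ for each i ∈ [1,k]. Let i₀ = min{ i ∈ [1,k] : |Φ_i| ≥ k }, and assume i₀ < k and Φ_i = ∅ for all i < i₀. Then φ_k ≥ Σ_{i=2}^{k−i₀} (i−1)·φ_{k−i} + (k−1)γ − (k−1)(d + 2ε). -/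

import Mathlib

/-- `Φ` is a `k`-clique-cover of `G`: a collection of pairwise vertex-disjoint cliques,
each of order between `1` and `k`, whose vertex sets partition `V(G)`. -/
def IsCliqueCover {V : Type*} (G : SimpleGraph V) (k : ℕ) (Φ : Finset (Finset V)) : Prop :=
  (∀ S ∈ Φ, G.IsClique (S : Set V) ∧ 1 ≤ S.card ∧ S.card ≤ k) ∧
  ((Φ : Set (Finset V)).Pairwise fun S T => Disjoint S T) ∧
  ∀ v : V, ∃ S ∈ Φ, v ∈ S

/-- `coverVec Φ i = |Φ_i|`, the number of cliques of order `i` in `Φ`. -/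
def coverVec {V : Type*} (Φ : Finset (Finset V)) (i : ℕ) : ℕ :=
  (Φ.filter fun S => S.card = i).card

/-- `Φ` is a maximal `k`-clique-cover of `G`: the vector `(|Φ_k|, …, |Φ_1|)` is
lexicographically maximal among all `k`-clique-covers of `G`. -/
def IsMaxCliqueCover {V : Type*} (G : SimpleGraph V) (k : ℕ) (Φ : Finset (Finset V)) : Prop :=
  IsCliqueCover G k Φ ∧
  ∀ Ψ : Finset (Finset V), IsCliqueCover G k Ψ →
    ∀ j, 1 ≤ j → j ≤ k →
      (∀ i, j < i → i ≤ k → coverVec Ψ i = coverVec Φ i) →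
      coverVec Ψ j ≤ coverVec Φ j

/-!
Let `Φ_a` be the cells of the least order `a`. Between two of them, `P` and `Q`, Hall's theorem
gives a perfect matching of non-edges, since a violation would yield a clique of order `a + 1`
inside `P ∪ Q`; averaging the Ore condition over these matchings, a vertex covered by `Φ_a` has
degree at least `D = (1 - 1/(k-1) + γ - d - 2ε)ℓ` on average.

Conversely, each cell `Q` contributes at most `|Q| - 1` to that average. If `|Q| < k`, every vertex
of a cell of order `a` misses a vertex of `Q`. If `|Q| = k`, a cell `Y` of `Φ_a` may have a vertex
`y` joined to all of `Q`; but then no vertex of `Q` is joined to all of another cell `P` of `Φ_a`,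
for otherwise it could be moved to `P` and replaced by `y`. The edges gained on `Y` are outweighed
by the non-edges lost on the others as soon as `k ≤ |Φ_a|(k - a)`.

Hence `D ≤ ∑ (|Q| - 1) = ℓ - |Φ|`, and the claim follows from
`∑ (|Q| - (k-1)) = |Φ_k| - ∑ (i-1)|Φ_{k-i}|`.
-/

section CliqueCover

open Finset

variable {V : Type*} {G : SimpleGraph V} {k : ℕ} {Φ Ψ : Finset (Finset V)}

theorem coverVec_eq_zero_iff {i : ℕ} : coverVec Φ i = 0 ↔ ∀ S ∈ Φ, #S ≠ i := by
  rw [coverVec, card_eq_zero, filter_eq_empty_iff]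

theorem coverVec_singleton (S : Finset V) (i : ℕ) :
    coverVec {S} i = if #S = i then 1 else 0 := by
  rw [coverVec, filter_singleton]
  split_ifs <;> simp

theorem coverVec_union [DecidableEq V] (h : Disjoint Φ Ψ) (i : ℕ) :
    coverVec (Φ ∪ Ψ) i = coverVec Φ i + coverVec Ψ i := by
  rw [coverVec, filter_union, card_union_of_disjoint (disjoint_filter_filter h)]
  rfl

theorem coverVec_insert [DecidableEq V] {S : Finset V} (hS : S ∉ Φ) (i : ℕ) :
    coverVec (insert S Φ) i = (if #S = i then 1 else 0) + coverVec Φ i := by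
  rw [insert_eq, coverVec_union (disjoint_singleton_left.2 hS), coverVec_singleton]

theorem coverVec_pair [DecidableEq V] {S T : Finset V} (hST : S ≠ T) (i : ℕ) :
    coverVec {S, T} i = (if #S = i then 1 else 0) + if #T = i then 1 else 0 := by
  rw [coverVec_insert (by simpa using hST), coverVec_singleton]

theorem sum_card_sub_eq (R : Type*) [CommRing R] {a : ℕ} (hΦ : ∀ Q ∈ Φ, a ≤ #Q ∧ #Q ≤ k)
    (hak : a < k) :
    ∑ Q ∈ Φ, ((#Q : R) - (k - 1)) =
      coverVec Φ k - ∑ i ∈ Icc 2 (k - a), ((i : R) - 1) * coverVec Φ (k - i) := by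
  have hmaps : ∀ Q ∈ Φ, k - #Q ∈ Ico 0 (k - a + 1) := fun Q hQ => by
    have := hΦ Q hQ
    rw [mem_Ico]
    omega
  calc ∑ Q ∈ Φ, ((#Q : R) - (k - 1))
      = ∑ i ∈ Ico 0 (k - a + 1), ∑ Q ∈ Φ with k - #Q = i, ((#Q : R) - (k - 1)) :=
        (sum_fiberwise_of_maps_to hmaps _).symm
    _ = ∑ i ∈ Ico 0 (k - a + 1), (1 - (i : R)) * coverVec Φ (k - i) := by
        refine sum_congr rfl fun i hi => ?_
        have hfiber : {Q ∈ Φ | k - #Q = i} = {Q ∈ Φ | #Q = k - i} :=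
          filter_congr fun Q hQ => by
            have := hΦ Q hQ
            rw [mem_Ico] at hi
            omega
        have hik : i ≤ k := by
          rw [mem_Ico] at hi
          omega
        rw [hfiber, coverVec, mul_comm, ← nsmul_eq_mul]
        refine sum_eq_card_nsmul fun Q hQ => ?_
        rw [(mem_filter.1 hQ).2, Nat.cast_sub hik]
        ring
    _ = coverVec Φ k - ∑ i ∈ Icc 2 (k - a), ((i : R) - 1) * coverVec Φ (k - i) := by
        have hneg (i : ℕ) : (1 - (i : R)) * coverVec Φ (k - i) =
            -(((i : R) - 1) * coverVec Φ (k - i)) := by ring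
        rw [sum_eq_sum_Ico_succ_bot (by omega), sum_eq_sum_Ico_succ_bot (by omega),
          Ico_add_one_right_eq_Icc, sum_congr rfl fun i _ => hneg i, sum_neg_distrib]
        simp [sub_eq_add_neg]

theorem card_mul_le_sum_of_pairwise {ι R : Type*} [CommRing R] [LinearOrder R]
    [IsStrictOrderedRing R] {S : Finset ι} {f : ι → R} {c : R} (hS : 2 ≤ #S)
    (h : (S : Set ι).Pairwise fun i j => 2 * c ≤ f i + f j) : #S * c ≤ ∑ i ∈ S, f i := by
  classical
  have hsum : ∑ i ∈ S, ∑ _j ∈ S.erase i, 2 * c ≤ ∑ i ∈ S, ∑ j ∈ S.erase i, (f i + f j) :=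
    sum_le_sum fun i hi => sum_le_sum fun j hj =>
      h hi (mem_of_mem_erase hj) (ne_of_mem_erase hj).symm
  have hcard {i : ι} (hi : i ∈ S) : (#(S.erase i) : R) = #S - 1 := by
    rw [card_erase_of_mem hi, Nat.cast_pred (by omega)]
  have hleft : ∑ i ∈ S, ∑ _j ∈ S.erase i, 2 * c = 2 * (#S - 1) * (#S * c) := by
    rw [sum_congr rfl fun i hi => by rw [sum_const, nsmul_eq_mul, hcard hi], sum_const,
      nsmul_eq_mul]
    ring
  have hright : ∑ i ∈ S, ∑ j ∈ S.erase i, (f i + f j) = 2 * (#S - 1) * ∑ i ∈ S, f i := by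
    have hrow {i : ι} (hi : i ∈ S) :
        ∑ j ∈ S.erase i, (f i + f j) = (#S - 2) * f i + ∑ j ∈ S, f j := by
      rw [sum_add_distrib, sum_const, nsmul_eq_mul, hcard hi, ← add_sum_erase S f hi]
      ring
    rw [sum_congr rfl fun i hi => hrow hi, sum_add_distrib, ← mul_sum, sum_const, nsmul_eq_mul]
    ring
  have hpos : (0 : R) < 2 * (#S - 1) := by
    have : (2 : R) ≤ #S := by exact_mod_cast hS
    linarith
  rw [hleft, hright] at hsum
  exact le_of_mul_le_mul_left hsum hpos

theorem card_interedges_add_card_le [DecidableRel G.Adj] {X Q : Finset V}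
    (h : ∀ x ∈ X, ∃ y ∈ Q, ¬ G.Adj x y) : #(G.interedges X Q) + #X ≤ #X * #Q := by
  classical
  rw [← Rel.card_interedges_add_card_interedges_compl G.Adj X Q]
  refine Nat.add_le_add_left ?_ _
  choose! g hgQ hg using h
  refine card_le_card_of_injOn (fun x => (x, g x)) (fun x hx => ?_)
    fun x _ x' _ hxx' => (Prod.ext_iff.1 hxx').1
  exact Rel.mk_mem_interedges_iff.2 ⟨hx, hgQ x hx, hg x hx⟩

theorem sum_card_interedges_add_le_of_exists_not_adj [DecidableRel G.Adj] {S : Finset (Finset V)}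
    {a : ℕ} {Q : Finset V} (hSa : ∀ X ∈ S, #X = a) (h : ∀ X ∈ S, ∀ x ∈ X, ∃ y ∈ Q, ¬ G.Adj x y) :
    ∑ X ∈ S, #(G.interedges X Q) + #S * a ≤ #S * (a * #Q) := by
  have hle : ∀ X ∈ S, #(G.interedges X Q) + a ≤ a * #Q := fun X hX => by
    have := card_interedges_add_card_le (h X hX)
    rwa [hSa X hX] at this
  simpa [sum_add_distrib] using sum_le_sum hle

namespace IsCliqueCover

theorem eq_of_mem (hΦ : IsCliqueCover G k Φ) {S T : Finset V} (hS : S ∈ Φ) (hT : T ∈ Φ) {v : V}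
    (hvS : v ∈ S) (hvT : v ∈ T) : S = T :=
  hΦ.2.1.eq hS hT fun h => disjoint_left.1 h hvS hvT

theorem biUnion_eq_univ [Fintype V] [DecidableEq V] (hΦ : IsCliqueCover G k Φ) :
    Φ.biUnion id = univ :=
  eq_univ_iff_forall.2 fun v => mem_biUnion.2 (hΦ.2.2 v)

theorem sum_card [Fintype V] (hΦ : IsCliqueCover G k Φ) : ∑ Q ∈ Φ, #Q = Fintype.card V := by
  classical
  rw [← card_univ, ← hΦ.biUnion_eq_univ, card_biUnion (t := id) hΦ.2.1]
  rfl

theorem card_vertices_pos [Fintype V] (hΦ : IsCliqueCover G k Φ) (hne : Φ.Nonempty) :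
    0 < Fintype.card V := by
  obtain ⟨Q, hQ⟩ := hne
  rw [← hΦ.sum_card]
  exact (hΦ.1 Q hQ).2.1.trans (single_le_sum_of_canonicallyOrdered hQ)

theorem card_sub_card_mul (R : Type*) [CommRing R] [Fintype V] (hΦ : IsCliqueCover G k Φ)
    {a : ℕ} (hΦa : ∀ Q ∈ Φ, a ≤ #Q) (hak : a < k) :
    (Fintype.card V : R) - #Φ * (k - 1) =
      coverVec Φ k - ∑ i ∈ Icc 2 (k - a), ((i : R) - 1) * coverVec Φ (k - i) := by
  rw [← sum_card_sub_eq R (fun Q hQ => ⟨hΦa Q hQ, (hΦ.1 Q hQ).2.2⟩) hak, sum_sub_distrib,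
    ← hΦ.sum_card, sum_const, nsmul_eq_mul, Nat.cast_sum]

theorem sum_degree [Fintype V] [DecidableRel G.Adj] (hΦ : IsCliqueCover G k Φ) (X : Finset V) :
    ∑ x ∈ X, G.degree x = ∑ Q ∈ Φ, #(G.interedges X Q) := by
  classical
  calc ∑ x ∈ X, G.degree x = #(G.interedges X univ) := by
        simp only [SimpleGraph.interedges_def, card_filter, sum_product,
          ← SimpleGraph.card_neighborFinset_eq_degree, SimpleGraph.neighborFinset_eq_filter]
    _ = ∑ Q ∈ Φ, #(G.interedges X Q) := by
        rw [← hΦ.biUnion_eq_univ, SimpleGraph.interedges_biUnion_right, card_biUnion]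
        · rfl
        · exact fun S hS T hT hST => G.interedges_disjoint_right X (hΦ.2.1 hS hT hST)

end IsCliqueCover

section Exchange

variable [DecidableEq V] {R B : Finset (Finset V)}

/-- The cover obtained from `Φ` by making the members of `B` cells of their own: each of the cells
in `R ⊆ Φ`, which are meant to contain `⋃ B`, is cut down to its vertices outside `⋃ B`. -/
def cliqueExchange (Φ R B : Finset (Finset V)) : Finset (Finset V) :=
  B ∪ (Φ \ R) ∪ (R.image (· \ B.biUnion id)).erase ∅

namespace IsCliqueCover

theorem disjoint_of_mem_sdiff (hΦ : IsCliqueCover G k Φ) (hR : R ⊆ Φ)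
    (hBR : B.biUnion id ⊆ R.biUnion id) {S T : Finset V} (hS : S ∈ B) (hT : T ∈ Φ \ R) :
    Disjoint S T := by
  rw [mem_sdiff] at hT
  refine disjoint_left.2 fun v hvS hvT => ?_
  obtain ⟨P, hP, hvP⟩ := mem_biUnion.1 (hBR (mem_biUnion.2 ⟨S, hS, hvS⟩))
  exact hT.2 (hΦ.eq_of_mem hT.1 (hR hP) hvT hvP ▸ hP)

theorem pairwise_disjoint_cliqueExchange (hΦ : IsCliqueCover G k Φ) (hR : R ⊆ Φ)
    (hdisj : (B : Set (Finset V)).Pairwise fun S T => Disjoint S T)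
    (hBR : B.biUnion id ⊆ R.biUnion id) :
    (cliqueExchange Φ R B : Set (Finset V)).Pairwise fun S T => Disjoint S T := by
  have hBΦ {S T : Finset V} := hΦ.disjoint_of_mem_sdiff (S := S) (T := T) hR hBR
  have hBcut {S P : Finset V} (hS : S ∈ B) : Disjoint S (P \ B.biUnion id) :=
    disjoint_sdiff.mono_left (subset_biUnion_of_mem id hS)
  have hΦcut {S P : Finset V} (hS : S ∈ Φ \ R) (hP : P ∈ R) : Disjoint S (P \ B.biUnion id) :=
    (hΦ.2.1 (mem_sdiff.1 hS).1 (hR hP)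
      fun h => (mem_sdiff.1 hS).2 (h ▸ hP)).mono_right sdiff_subset
  intro S hS T hT hST
  simp only [cliqueExchange, mem_coe, mem_union, mem_erase, mem_image] at hS hT
  obtain (hS | hS) | ⟨-, P, hP, rfl⟩ := hS <;> obtain (hT | hT) | ⟨-, Q, hQ, rfl⟩ := hT
  · exact hdisj hS hT hST
  · exact hBΦ hS hT
  · exact hBcut hS
  · exact (hBΦ hT hS).symm
  · exact hΦ.2.1 (mem_sdiff.1 hS).1 (mem_sdiff.1 hT).1 hST
  · exact hΦcut hS hQ
  · exact (hBcut hT).symm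
  · exact (hΦcut hT hP).symm
  · have hPQ : P ≠ Q := fun h => hST (h ▸ rfl)
    exact (hΦ.2.1 (hR hP) (hR hQ) hPQ).mono sdiff_subset sdiff_subset

theorem exchange (hΦ : IsCliqueCover G k Φ) (hR : R ⊆ Φ)
    (hB : ∀ S ∈ B, G.IsClique (S : Set V) ∧ 1 ≤ #S ∧ #S ≤ k)
    (hdisj : (B : Set (Finset V)).Pairwise fun S T => Disjoint S T)
    (hBR : B.biUnion id ⊆ R.biUnion id) : IsCliqueCover G k (cliqueExchange Φ R B) := by
  refine ⟨fun S hS => ?_, hΦ.pairwise_disjoint_cliqueExchange hR hdisj hBR, fun v => ?_⟩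
  · simp only [cliqueExchange, mem_union, mem_erase, mem_image] at hS
    obtain (hS | hS) | ⟨hne, P, hP, rfl⟩ := hS
    · exact hB S hS
    · exact hΦ.1 S (mem_sdiff.1 hS).1
    · obtain ⟨hclique, -, hcard⟩ := hΦ.1 P (hR hP)
      exact ⟨hclique.subset (coe_subset.2 sdiff_subset),
        card_pos.2 (nonempty_iff_ne_empty.2 hne), (card_le_card sdiff_subset).trans hcard⟩
  · simp only [cliqueExchange, mem_union, mem_erase, mem_image]
    obtain ⟨P, hP, hvP⟩ := hΦ.2.2 v
    by_cases hvB : v ∈ B.biUnion id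
    · obtain ⟨S, hS, hvS⟩ := mem_biUnion.1 hvB
      exact ⟨S, .inl (.inl hS), hvS⟩
    by_cases hPR : P ∈ R
    · have hv : v ∈ P \ B.biUnion id := mem_sdiff.2 ⟨hvP, hvB⟩
      exact ⟨_, .inr ⟨ne_empty_of_mem hv, P, hPR, rfl⟩, hv⟩
    · exact ⟨P, .inl (.inr (mem_sdiff.2 ⟨hP, hPR⟩)), hvP⟩

theorem coverVec_cliqueExchange (hΦ : IsCliqueCover G k Φ) (hR : R ⊆ Φ)
    (hB : ∀ S ∈ B, 1 ≤ #S) (hBR : B.biUnion id ⊆ R.biUnion id) {i : ℕ}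
    (hrest : ∀ P ∈ R, #(P \ B.biUnion id) < i) :
    coverVec (cliqueExchange Φ R B) i + coverVec R i = coverVec Φ i + coverVec B i := by
  have hcut : coverVec (cliqueExchange Φ R B) i = coverVec (B ∪ (Φ \ R)) i := by
    rw [coverVec, coverVec, cliqueExchange, filter_union, union_eq_left.2]
    intro S hS
    simp only [mem_filter, mem_erase, mem_image] at hS
    obtain ⟨⟨-, P, hP, rfl⟩, hcard⟩ := hS
    exact absurd hcard (hrest P hP).ne
  have hdisj : Disjoint B (Φ \ R) := disjoint_left.2 fun S hSB hSΦ =>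
    (card_pos.1 (hB S hSB)).ne_empty
      (disjoint_self.1 (hΦ.disjoint_of_mem_sdiff hR hBR hSB hSΦ))
  calc coverVec (cliqueExchange Φ R B) i + coverVec R i
      = coverVec B i + (coverVec (Φ \ R) i + coverVec R i) := by
        rw [hcut, coverVec_union hdisj, add_assoc]
    _ = coverVec Φ i + coverVec B i := by
        rw [← coverVec_union sdiff_disjoint, sdiff_union_of_subset hR, add_comm]

end IsCliqueCover

theorem IsMaxCliqueCover.coverVec_le_of_exchange (hΦ : IsMaxCliqueCover G k Φ) (hR : R ⊆ Φ)
    (hB : ∀ S ∈ B, G.IsClique (S : Set V) ∧ 1 ≤ #S ∧ #S ≤ k)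
    (hdisj : (B : Set (Finset V)).Pairwise fun S T => Disjoint S T)
    (hBR : B.biUnion id ⊆ R.biUnion id) {j : ℕ} (hj : 1 ≤ j) (hjk : j ≤ k)
    (hrest : ∀ P ∈ R, #(P \ B.biUnion id) < j)
    (heq : ∀ i, j < i → coverVec B i = coverVec R i) :
    coverVec B j ≤ coverVec R j := by
  have hcount (i : ℕ) (hji : j ≤ i) := hΦ.1.coverVec_cliqueExchange (i := i) hR
    (fun S hS => (hB S hS).2.1) hBR fun P hP => (hrest P hP).trans_le hji
  have hmax := hΦ.2 _ (hΦ.1.exchange hR hB hdisj hBR) j hj hjk fun i hji _ => by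
    have := hcount i hji.le
    have := heq i hji
    omega
  have := hcount j le_rfl
  omega

end Exchange

namespace IsMaxCliqueCover

variable {P Q K : Finset V}

theorem exists_not_disjoint_card_le (hΦ : IsMaxCliqueCover G k Φ) {C : Finset V}
    (hC : G.IsClique (C : Set V)) (hne : C.Nonempty) (hCk : #C ≤ k) :
    ∃ T ∈ Φ, ¬ Disjoint T C ∧ #C ≤ #T := by
  classical
  by_contra! hsmall
  set R := {T ∈ Φ | ¬ Disjoint T C}
  have hR : ∀ T ∈ R, #T < #C := fun T hT =>
    hsmall T (mem_filter.1 hT).1 (mem_filter.1 hT).2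
  have hCR : ({C} : Finset (Finset V)).biUnion id ⊆ R.biUnion id := fun v hv => by
    rw [singleton_biUnion, id] at hv
    obtain ⟨T, hT, hvT⟩ := hΦ.1.2.2 v
    exact mem_biUnion.2 ⟨T, mem_filter.2 ⟨hT, fun h => disjoint_left.1 h hvT hv⟩, hvT⟩
  have hle := hΦ.coverVec_le_of_exchange (B := {C}) (filter_subset _ _)
    (by simpa using ⟨hC, hne, hCk⟩) (by simp) hCR (card_pos.2 hne) hCk
    (fun T hT => (card_le_card sdiff_subset).trans_lt (hR T hT))
    fun i hi => by
      rw [coverVec_singleton, if_neg hi.ne,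
        coverVec_eq_zero_iff.2 fun T hT => ((hR T hT).trans hi).ne]
  rw [coverVec_singleton, if_pos rfl, coverVec_eq_zero_iff.2 fun T hT => (hR T hT).ne] at hle
  omega

theorem card_le_max_of_subset_union [DecidableEq V] (hΦ : IsMaxCliqueCover G k Φ) (hP : P ∈ Φ)
    (hQ : Q ∈ Φ) (hPk : #P < k) (hQk : #Q < k) {C : Finset V} (hC : G.IsClique (C : Set V))
    (hCPQ : C ⊆ P ∪ Q) : #C ≤ max #P #Q := by
  by_contra! hlt
  obtain ⟨C', hC', hcard⟩ := exists_subset_card_eq (Nat.succ_le_of_lt hlt)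
  obtain ⟨T, hT, hmeet, hle⟩ := hΦ.exists_not_disjoint_card_le
    (hC.subset (coe_subset.2 hC')) (card_pos.1 (by omega)) (by omega)
  obtain ⟨v, hvT, hvC'⟩ := not_disjoint_iff.1 hmeet
  have hTPQ : T = P ∨ T = Q := (mem_union.1 (hCPQ (hC' hvC'))).imp
    (hΦ.1.eq_of_mem hT hP hvT) (hΦ.1.eq_of_mem hT hQ hvT)
  obtain rfl | rfl := hTPQ <;> omega

-- Hall's condition: if `s ⊆ P` has non-neighbourhood `N` in `Q`, then `s ∪ (Q \ N)` is a clique.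
theorem exists_embedding_not_adj (hΦ : IsMaxCliqueCover G k Φ) (hP : P ∈ Φ) (hQ : Q ∈ Φ)
    (hne : P ≠ Q) (hPQ : #P ≤ #Q) (hQk : #Q < k) : ∃ g : P ↪ Q, ∀ x : P, ¬ G.Adj x (g x) := by
  classical
  let nonNbrs (x : P) : Finset Q := {y : Q | ¬ G.Adj x y}
  suffices hall : ∀ s : Finset P, #s ≤ #(s.biUnion nonNbrs) by
    obtain ⟨g, hinj, hg⟩ := (all_card_le_biUnion_card_iff_exists_injective nonNbrs).1 hall
    exact ⟨⟨g, hinj⟩, fun x => (mem_filter.1 (hg x)).2⟩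
  intro s
  set N := s.biUnion nonNbrs
  let sV : Finset V := s.map (.subtype _)
  let NcV : Finset V := Nᶜ.map (.subtype _)
  have hsP : sV ⊆ P := map_subtype_subset s
  have hNcQ : NcV ⊆ Q := map_subtype_subset Nᶜ
  have hadj : ∀ x ∈ sV, ∀ y ∈ NcV, G.Adj x y := by
    intro x hx y hy
    obtain ⟨x, hxs, rfl⟩ := mem_map.1 hx
    obtain ⟨y, hyN, rfl⟩ := mem_map.1 hy
    by_contra hxy
    have hyx : y ∈ nonNbrs x := mem_filter.2 ⟨mem_univ y, hxy⟩
    exact mem_compl.1 hyN (mem_biUnion.2 ⟨x, hxs, hyx⟩)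
  have hclique : G.IsClique (sV ∪ NcV : Finset V) := by
    have hP' := (hΦ.1.1 P hP).1.subset (coe_subset.2 hsP)
    have hQ' := (hΦ.1.1 Q hQ).1.subset (coe_subset.2 hNcQ)
    have := G.symm
    rw [coe_union, SimpleGraph.IsClique, Set.pairwise_union_of_symm]
    exact ⟨hP', hQ', fun x hx y hy _ => hadj x hx y hy⟩
  have hcard : #(sV ∪ NcV) = #s + (#Q - #N) := by
    rw [card_union_of_disjoint ((hΦ.1.2.1 hP hQ hne).mono hsP hNcQ), card_map, card_map,
      card_compl, Fintype.card_coe]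
  have hle := hΦ.card_le_max_of_subset_union hP hQ (by omega) hQk hclique
    (union_subset_union hsP hNcQ)
  have hNQ : #N ≤ #Q := by simpa using card_le_univ N
  omega

theorem exists_not_adj (hΦ : IsMaxCliqueCover G k Φ) (hP : P ∈ Φ) (hQ : Q ∈ Φ)
    (hPQ : #P ≤ #Q) (hQk : #Q < k) {x : V} (hx : x ∈ P) : ∃ y ∈ Q, ¬ G.Adj x y := by
  by_cases hne : P = Q
  · exact ⟨x, hne ▸ hx, G.irrefl⟩
  · obtain ⟨g, hg⟩ := hΦ.exists_embedding_not_adj hP hQ hne hPQ hQk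
    exact ⟨g ⟨x, hx⟩, (g ⟨x, hx⟩).2, hg ⟨x, hx⟩⟩

theorem card_le_of_union_subset_union [DecidableEq V] (hΦ : IsMaxCliqueCover G k Φ) (hP : P ∈ Φ)
    (hQ : Q ∈ Φ) (hK : K ∈ Φ) (hPQ : P ≠ Q) (hPK : P ≠ K) (hQK : Q ≠ K) (hcard : #Q ≤ #P)
    {P' K' : Finset V} (hP' : G.IsClique (P' : Set V)) (hP'k : #P' ≤ k)
    (hK' : G.IsClique (K' : Set V)) (hK'card : #K' = #K) (hdisj : Disjoint P' K')
    (hsub : P' ∪ K' ⊆ P ∪ (Q ∪ K)) (hKsub : K ⊆ P' ∪ K') : #P' ≤ #P := by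
  by_contra! hlt
  obtain ⟨-, hK1, hKk⟩ := hΦ.1.1 K hK
  have hne : P' ≠ K' := hdisj.ne (card_pos.1 (by omega)).ne_empty
  have hunion : ({P', K'} : Finset (Finset V)).biUnion id = P' ∪ K' := by
    rw [biUnion_insert, singleton_biUnion, id, id]
  have hclique : ∀ S ∈ ({P', K'} : Finset (Finset V)),
      G.IsClique (S : Set V) ∧ 1 ≤ #S ∧ #S ≤ k := by
    simp only [mem_insert, mem_singleton, forall_eq_or_imp, forall_eq]
    exact ⟨⟨hP', by omega, hP'k⟩, hK', by omega, by omega⟩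
  have hrest : ∀ S ∈ ({P, Q, K} : Finset (Finset V)), #(S \ (P' ∪ K')) < #P' := by
    simp only [mem_insert, mem_singleton, forall_eq_or_imp, forall_eq]
    rw [sdiff_eq_empty_iff_subset.2 hKsub, card_empty]
    exact ⟨(card_le_card sdiff_subset).trans_lt hlt,
      (card_le_card sdiff_subset).trans_lt (by omega), by omega⟩
  have hR (i : ℕ) (hi : #P' ≤ i) : coverVec {P, Q, K} i = if #K = i then 1 else 0 := by
    rw [coverVec_insert (by simp [hPQ, hPK]), coverVec_pair hQK, if_neg (by omega : #P ≠ i),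
      if_neg (by omega : #Q ≠ i), zero_add, zero_add]
  have hB (i : ℕ) : coverVec {P', K'} i =
      (if #P' = i then 1 else 0) + if #K = i then 1 else 0 := by
    rw [coverVec_pair hne, hK'card]
  have hle := hΦ.coverVec_le_of_exchange (R := {P, Q, K}) (B := {P', K'}) (j := #P')
    (by simp [insert_subset_iff, hP, hQ, hK]) hclique
    (by simpa [Set.pairwise_pair, hdisj.symm] using fun _ => hdisj)
    (by rw [hunion]; simpa using hsub) (by omega) hP'k (by rwa [hunion])
    fun i hi => by rw [hB, hR i hi.le, if_neg hi.ne, zero_add]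
  rw [hB, hR _ le_rfl, if_pos rfl] at hle
  omega

-- Otherwise `q` moves to `P` and `y` takes its place in `K`: one more clique of order `#P + 1`.
theorem exists_not_adj_of_forall_adj (hΦ : IsMaxCliqueCover G k Φ) (hP : P ∈ Φ) (hQ : Q ∈ Φ)
    (hK : K ∈ Φ) (hPQ : P ≠ Q) (hPK : P ≠ K) (hQK : Q ≠ K) (hcard : #Q ≤ #P) (hPk : #P < k)
    {q y : V} (hq : q ∈ K) (hy : y ∈ Q) (hyK : ∀ x ∈ K, G.Adj y x) : ∃ x ∈ P, ¬ G.Adj q x := by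
  classical
  by_contra! hqP
  have hqP' : q ∉ P := fun h => hPK (hΦ.1.eq_of_mem hP hK h hq)
  have hyP : y ∉ P := fun h => hPQ (hΦ.1.eq_of_mem hP hQ h hy)
  have hyK' : y ∉ K := fun h => hQK (hΦ.1.eq_of_mem hQ hK hy h)
  have hyq : y ≠ q := fun h => hyK' (h ▸ hq)
  have hcardP : #(insert q P) = #P + 1 := card_insert_of_notMem hqP'
  have hcardK : #(insert y (K.erase q)) = #K := by
    rw [card_insert_of_notMem fun h => hyK' (mem_of_mem_erase h), card_erase_add_one hq]
  have hcliqueP : G.IsClique (insert q P : Finset V) := by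
    rw [coe_insert]
    exact (hΦ.1.1 P hP).1.insert fun x hx _ => hqP x hx
  have hcliqueK : G.IsClique (insert y (K.erase q) : Finset V) := by
    rw [coe_insert]
    exact ((hΦ.1.1 K hK).1.subset (coe_subset.2 (erase_subset q K))).insert
      fun x hx _ => hyK x (mem_of_mem_erase hx)
  have hdisj : Disjoint (insert q P) (insert y (K.erase q)) := by
    rw [disjoint_insert_left, disjoint_insert_right, mem_insert]
    exact ⟨by simp [hyq.symm], hyP, (hΦ.1.2.1 hP hK hPK).mono_right (erase_subset q K)⟩
  have hle := hΦ.card_le_of_union_subset_union hP hQ hK hPQ hPK hQK hcard hcliqueP (by omega)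
    hcliqueK hcardK hdisj (by grind) (by grind)
  omega

theorem two_mul_card_mul_le_sum_add_sum {R : Type*} [CommSemiring R] [PartialOrder R]
    [IsOrderedRing R] (hΦ : IsMaxCliqueCover G k Φ) {f : V → R} {c : R}
    (hf : ∀ x y, x ≠ y → ¬ G.Adj x y → 2 * c ≤ f x + f y) (hP : P ∈ Φ) (hQ : Q ∈ Φ)
    (hPQ : P ≠ Q) (hcard : #P = #Q) (hPk : #P < k) :
    2 * (#P * c) ≤ ∑ x ∈ P, f x + ∑ y ∈ Q, f y := by
  obtain ⟨g, hg⟩ := hΦ.exists_embedding_not_adj hP hQ hPQ hcard.le (by omega)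
  have hbij : Function.Bijective g :=
    (Fintype.bijective_iff_injective_and_card g).2 ⟨g.injective, by simpa using hcard⟩
  have hgne (x : P) : (x : V) ≠ g x := fun h =>
    hPQ (hΦ.1.eq_of_mem hP hQ x.2 (h ▸ (g x).2))
  calc 2 * (#P * c) = ∑ _x : P, 2 * c := by
        rw [sum_const, card_univ, Fintype.card_coe, nsmul_eq_mul, mul_left_comm]
    _ ≤ ∑ x : P, (f x + f (g x)) := sum_le_sum fun x _ => hf x (g x) (hgne x) (hg x)
    _ = ∑ x ∈ P, f x + ∑ y ∈ Q, f y := by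
        rw [sum_add_distrib, hbij.sum_comp fun y : Q => f y, sum_coe_sort, sum_coe_sort]

-- If some `Y ∈ S` contains a vertex adjacent to all of `K`, then each vertex of `K` has a
-- non-neighbour in every other member of `S`; as `#S * a ≤ (#S - 1) * #K`, these non-edges suffice.
theorem sum_card_interedges_add_le_of_lt_card [DecidableRel G.Adj] (hΦ : IsMaxCliqueCover G k Φ)
    {S : Finset (Finset V)} {a : ℕ} (hS : S ⊆ Φ) (hSa : ∀ X ∈ S, #X = a)
    (hK : K ∈ Φ) (haK : a < #K) (hKS : #K ≤ #S * (#K - a)) :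
    ∑ X ∈ S, #(G.interedges X K) + #S * a ≤ #S * (a * #K) := by
  classical
  have hSK : ∀ X ∈ S, X ≠ K := fun X hX h => by
    have := hSa X hX
    rw [h] at this
    omega
  by_cases hfull : ∃ Y ∈ S, ∃ y ∈ Y, ∀ x ∈ K, G.Adj y x
  · obtain ⟨Y, hY, y, hy, hyK⟩ := hfull
    have hne : ∀ X ∈ S.erase Y, #(G.interedges X K) + #K ≤ a * #K := fun X hX => by
      obtain ⟨hXY, hXS⟩ := mem_erase.1 hX
      have hle := card_interedges_add_card_le fun q (hq : q ∈ K) =>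
        hΦ.exists_not_adj_of_forall_adj (hS hXS) (hS hY) hK hXY (hSK X hXS) (hSK Y hY)
          (by rw [hSa X hXS, hSa Y hY])
          (by rw [hSa X hXS]; exact haK.trans_le (hΦ.1.1 K hK).2.2) hq hy hyK
      have := G.symm
      rwa [SimpleGraph.interedges, Rel.card_interedges_comm, hSa X hXS, mul_comm] at hle
    have hsum := sum_le_sum hne
    have hYK := G.card_interedges_le_mul Y K
    rw [hSa Y hY] at hYK
    rw [sum_add_distrib, sum_const, sum_const, smul_eq_mul, smul_eq_mul] at hsum
    rw [← add_sum_erase S _ hY]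
    have haS : #S * a ≤ #(S.erase Y) * #K := by
      obtain ⟨b, hb⟩ := Nat.exists_eq_add_of_le haK.le
      rw [← card_erase_add_one hY] at hKS ⊢
      rw [hb, Nat.add_sub_cancel_left] at hKS
      rw [hb]
      linarith
    rw [← card_erase_add_one hY] at haS ⊢
    linarith
  · push Not at hfull
    exact sum_card_interedges_add_le_of_exists_not_adj hSa hfull

section DegreeSum

variable [Fintype V] [DecidableRel G.Adj] {S : Finset (Finset V)} {a : ℕ}

theorem sum_degree_add_le (hΦ : IsMaxCliqueCover G k Φ) (hS : S ⊆ Φ) (hSa : ∀ X ∈ S, #X = a)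
    (hak : a < k) (hΦa : ∀ Q ∈ Φ, a ≤ #Q) (hbig : k ≤ #S * (k - a)) :
    ∑ X ∈ S, ∑ x ∈ X, G.degree x + #Φ * (#S * a) ≤ #S * a * Fintype.card V := by
  have hcell : ∀ Q ∈ Φ, ∑ X ∈ S, #(G.interedges X Q) + #S * a ≤ #S * a * #Q := fun Q hQ => by
    rw [mul_assoc _ a]
    obtain hlt | hQk := (hΦ.1.1 Q hQ).2.2.lt_or_eq
    · exact sum_card_interedges_add_le_of_exists_not_adj hSa fun X hX x hx =>
        hΦ.exists_not_adj (hS hX) hQ (by rw [hSa X hX]; exact hΦa Q hQ) hlt hx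
    · exact hΦ.sum_card_interedges_add_le_of_lt_card hS hSa hQ (by rwa [hQk]) (by rwa [hQk])
  calc ∑ X ∈ S, ∑ x ∈ X, G.degree x + #Φ * (#S * a)
      = ∑ Q ∈ Φ, (∑ X ∈ S, #(G.interedges X Q) + #S * a) := by
        rw [sum_add_distrib, sum_const, smul_eq_mul, sum_comm]
        simp only [hΦ.1.sum_degree]
    _ ≤ ∑ Q ∈ Φ, #S * a * #Q := sum_le_sum hcell
    _ = #S * a * Fintype.card V := by rw [← mul_sum, hΦ.1.sum_card]

theorem add_card_le_card_vertices {R : Type*} [CommRing R] [LinearOrder R] [IsStrictOrderedRing R]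
    (hΦ : IsMaxCliqueCover G k Φ) {D : R}
    (hD : ∀ x y, x ≠ y → ¬ G.Adj x y → 2 * D ≤ G.degree x + G.degree y)
    (hS : S ⊆ Φ) (hSa : ∀ X ∈ S, #X = a) (ha : 1 ≤ a) (hak : a < k) (hΦa : ∀ Q ∈ Φ, a ≤ #Q)
    (hbig : k ≤ #S * (k - a)) : D + #Φ ≤ Fintype.card V := by
  have htwo : 2 ≤ #S := by
    by_contra! h
    have := hbig.trans (Nat.mul_le_mul_right (k - a) (Nat.le_of_lt_succ h))
    omega
  have hlower : #S * (a * D) ≤ ∑ X ∈ S, ∑ x ∈ X, (G.degree x : R) := by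
    refine card_mul_le_sum_of_pairwise htwo fun P hP Q hQ hPQ => ?_
    have hle := hΦ.two_mul_card_mul_le_sum_add_sum hD (hS hP) (hS hQ) hPQ
      (by rw [hSa P hP, hSa Q hQ]) (by rwa [hSa P hP])
    rwa [hSa P hP] at hle
  have hupper : (∑ X ∈ S, ∑ x ∈ X, (G.degree x : R)) + #Φ * (#S * a) ≤
      #S * a * Fintype.card V := by
    exact_mod_cast hΦ.sum_degree_add_le hS hSa hak hΦa hbig
  have hpos : (0 : R) < #S * a := by
    have : 0 < #S * a := by positivity
    exact_mod_cast this
  refine le_of_mul_le_mul_left ?_ hpos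
  linarith

end DegreeSum

end IsMaxCliqueCover

end CliqueCover

theorem phi_k_lower_bound_general {V : Type*} [Fintype V] (G : SimpleGraph V) [DecidableRel G.Adj]
    (k : ℕ) (δ : ℝ)
    (hOre : ∀ x y : V, x ≠ y → ¬ G.Adj x y →
      2 * (1 - 1 / ((k : ℝ) - 1) + δ) * Fintype.card V ≤ (G.degree x : ℝ) + (G.degree y : ℝ))
    (Φ : Finset (Finset V)) (hΦ : IsMaxCliqueCover G k Φ)
    (i₀ : ℕ) (hi₀1 : 1 ≤ i₀) (hi₀k : i₀ < k) (hbig : k ≤ coverVec Φ i₀ * (k - i₀))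
    (hempty : ∀ i, 1 ≤ i → i < i₀ → coverVec Φ i = 0) :
    (∑ i ∈ Finset.Icc 2 (k - i₀),
        ((i : ℝ) - 1) * ((coverVec Φ (k - i) : ℝ) / Fintype.card V)) + ((k : ℝ) - 1) * δ ≤
      (coverVec Φ k : ℝ) / Fintype.card V := by
  have hcells : ∀ Q ∈ Φ, i₀ ≤ Q.card := fun Q hQ => not_lt.1 fun h =>
    coverVec_eq_zero_iff.1 (hempty _ (hΦ.1.1 Q hQ).2.1 h) Q hQ rfl
  have hcount := hΦ.add_card_le_card_vertices (D := (1 - 1 / ((k : ℝ) - 1) + δ) * Fintype.card V)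
    (fun x y hne hxy => by rw [← mul_assoc]; exact hOre x y hne hxy) (Finset.filter_subset _ _)
    (fun X hX => (Finset.mem_filter.1 hX).2) hi₀1 hi₀k hcells hbig
  have hsum := hΦ.1.card_sub_card_mul ℝ hcells hi₀k
  have hk : (0 : ℝ) < k - 1 := by
    rw [sub_pos, Nat.one_lt_cast]
    omega
  have hV : (0 : ℝ) < Fintype.card V := by
    have hi₀ : 0 < coverVec Φ i₀ := Nat.pos_of_mul_pos_right (by omega : 0 < _ * (k - i₀))
    exact_mod_cast hΦ.1.card_vertices_pos ((Finset.card_pos.1 hi₀).mono (Finset.filter_subset _ _))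
  have hδ : (k - 1) * δ * Fintype.card V ≤ Fintype.card V - Φ.card * ((k : ℝ) - 1) := by
    have := mul_le_mul_of_nonneg_left hcount hk.le
    field_simp at this
    linarith
  simp_rw [← mul_div_assoc]
  rw [← Finset.sum_div, le_div_iff₀ hV, add_mul, div_mul_cancel₀ _ hV.ne']
  linarith

/-- **Proposition.** With `φ_i = |Φ_i|/ℓ`, `i₀ = min{i ∈ [1,k] : |Φ_i| ≥ k}`, `i₀ < k`,
and `Φ_i = ∅` for `i < i₀`, the Ore-type condition implies
`φ_k ≥ Σ_{i=2}^{k-i₀} (i-1) φ_{k-i} + (k-1)γ - (k-1)(d+2ε)`. -/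
theorem phi_k_lower_bound {V : Type*} [Fintype V]
    (G : SimpleGraph V) [DecidableRel G.Adj]
    (k : ℕ) (hk : 2 ≤ k) (γ d ε : ℝ) (hγ : 0 ≤ γ) (hd : 0 ≤ d) (hε : 0 ≤ ε)
    (hOre : ∀ x y : V, x ≠ y → ¬ G.Adj x y →
      2 * (1 - 1 / ((k : ℝ) - 1) + γ - d - 2 * ε) * (Fintype.card V) ≤
        (G.degree x : ℝ) + (G.degree y : ℝ))
    (Φ : Finset (Finset V)) (hΦ : IsMaxCliqueCover G k Φ)
    (i₀ : ℕ) (hi₀1 : 1 ≤ i₀) (hi₀k : i₀ < k)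
    (hbig : k ≤ coverVec Φ i₀)
    (hempty : ∀ i, 1 ≤ i → i < i₀ → coverVec Φ i = 0) :
    (∑ i ∈ Finset.Icc 2 (k - i₀),
        ((i : ℝ) - 1) * ((coverVec Φ (k - i) : ℝ) / (Fintype.card V : ℝ)))
      + ((k : ℝ) - 1) * γ - ((k : ℝ) - 1) * (d + 2 * ε)
    ≤ (coverVec Φ k : ℝ) / (Fintype.card V : ℝ) := by
  have h := phi_k_lower_bound_general G k (γ - d - 2 * ε)
    (fun x y hne hxy => le_of_eq_of_le (by ring) (hOre x y hne hxy)) Φ hΦ i₀ hi₀1 hi₀k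
    (hbig.trans (Nat.le_mul_of_pos_right _ (by omega))) hempty
  linarith
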